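/- (MMSE representation, Corollary 1.) In the exponential-family setup of the context with k = d, assume the domination hypothesis of Proposition 1 (so that F(y) := E[X|Y=y] is differentiable with J_y F(y) = (J_y T(y)) Var(X|Y=y)), assume the d×d matrix J_y T(y) is invertible for every y ∈ 𝒴, that the joint law of (X,Y) has density f(y|x) with respect to μ ⊗ Lebesgue restricted to ℝ^d × 𝒴, and that y ↦ ‖Var(X|Y=y)‖ f_Y(y) is Lebesgue-integrable on 𝒴. Then the MMSE matrix satisfies ∫_𝒴 ∫_{ℝ^d} (x − F(y))(x − F(y))ᵀ f(y|x) dμ(x) dy = ∫_𝒴 (J_y T(y))^{-1} (J_y F(y)) f_Y(y) dy, where (J_y T(y))_{j,l} = ∂T_l/∂y_j and (J_y F(y))_{j,i} = ∂F_i/∂y_j. -/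

import Mathlib

open MeasureTheory

/-!
Given `Y = y`, the law of `X` is the exponential tilt of the prior by `⟨x, T y⟩ - φ x`; the factor
`h y` cancels. Differentiating a tilted mean in a parameter gives the covariance with the derivative
of the exponent, so `J_y F = J_y T * Var(X | Y = y)`. Cancelling `J_y T` turns the right-hand side
into the integral of `Var(X | Y = y) * f_Y y`, and the inner integral on the left is that same
product by Bayes' formula.

Since `T` is only differentiable at each point, without any bound on its derivative nearby, the
differentiation under the integral dominates difference quotients at `y` instead of derivatives,
through `|exp s - exp t| ≤ |s - t| * (exp s + exp t)`.
-/

open scoped ProbabilityTheory Topology Matrix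

section Tilting

variable {Ω E : Type*} [MeasurableSpace Ω] {μ : Measure Ω}
  [NormedAddCommGroup E] [NormedSpace ℝ E]
  {a : E → Ω → ℝ} {a' : Ω → E →L[ℝ] ℝ} {v : Ω → ℝ} {y : E}

theorem abs_exp_sub_exp_le (s t : ℝ) :
    |Real.exp s - Real.exp t| ≤ |s - t| * (Real.exp s + Real.exp t) := by
  wlog hts : t ≤ s generalizing s t
  · rw [abs_sub_comm, abs_sub_comm s, add_comm]
    exact this t s (le_of_not_ge hts)
  have htangent : Real.exp s * (t - s + 1) ≤ Real.exp t := by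
    calc Real.exp s * (t - s + 1) ≤ Real.exp s * Real.exp (t - s) := by
          gcongr
          exact Real.add_one_le_exp _
      _ = Real.exp t := by rw [← Real.exp_add, add_sub_cancel]
  rw [abs_of_nonneg (sub_nonneg.2 (Real.exp_le_exp.2 hts)), abs_of_nonneg (sub_nonneg.2 hts)]
  nlinarith [mul_nonneg (sub_nonneg.2 hts) (Real.exp_pos t).le]

theorem norm_exp_mul_le {b c r w C : ℝ} (hC : 0 ≤ C) (hw : |w| ≤ C * r)
    (hb : r * Real.exp b ≤ c) : ‖Real.exp b * w‖ ≤ C * c := by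
  calc ‖Real.exp b * w‖ = |w| * Real.exp b := by
        rw [norm_mul, Real.norm_of_nonneg (Real.exp_pos _).le, Real.norm_eq_abs, mul_comm]
    _ ≤ C * (r * Real.exp b) := by
        rw [← mul_assoc]
        gcongr
    _ ≤ C * c := by gcongr

theorem hasFDerivAt_integral_exp_mul_of_dominated {L ψ : Ω → ℝ} {s : Set E} (hs : s ∈ 𝓝 y)
    (ha : ∀ z ∈ s, AEMeasurable (a z) μ) (ha' : AEStronglyMeasurable a' μ)
    (hv : AEStronglyMeasurable v μ) (hint : Integrable (fun ω => Real.exp (a y ω) * v ω) μ)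
    (hlip : ∀ z ∈ s, ∀ ω, |a z ω - a y ω| ≤ L ω * ‖z - y‖)
    (hψ : Integrable ψ μ) (hdom : ∀ z ∈ s, ∀ ω, L ω * |v ω| * Real.exp (a z ω) ≤ ψ ω)
    (hderiv : ∀ ω, HasFDerivAt (a · ω) (a' ω) y) :
    Integrable (fun ω => Real.exp (a y ω) • v ω • a' ω) μ ∧
      HasFDerivAt (fun z => ∫ ω, Real.exp (a z ω) * v ω ∂μ)
        (∫ ω, Real.exp (a y ω) • v ω • a' ω ∂μ) y := by
  refine hasFDerivAt_integral_of_dominated_loc_of_lip' (bound := fun ω => 2 * ψ ω) hs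
    (fun z hz => (ha z hz).exp.aestronglyMeasurable.mul hv) hint
    ((ha y (mem_of_mem_nhds hs)).exp.aestronglyMeasurable.smul (hv.smul ha'))
    (ae_of_all _ fun ω z hz => ?_) (hψ.const_mul 2) (ae_of_all _ fun ω => ?_)
  · calc ‖Real.exp (a z ω) * v ω - Real.exp (a y ω) * v ω‖
        = |Real.exp (a z ω) - Real.exp (a y ω)| * |v ω| := by
          rw [← sub_mul, Real.norm_eq_abs, abs_mul]
      _ ≤ L ω * ‖z - y‖ * (Real.exp (a z ω) + Real.exp (a y ω)) * |v ω| := by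
          gcongr
          refine (abs_exp_sub_exp_le _ _).trans ?_
          gcongr
          exact hlip z hz ω
      _ = (L ω * |v ω| * Real.exp (a z ω) + L ω * |v ω| * Real.exp (a y ω)) * ‖z - y‖ := by
          ring
      _ ≤ (ψ ω + ψ ω) * ‖z - y‖ := by
          gcongr
          exacts [hdom z hz ω, hdom y (mem_of_mem_nhds hs) ω]
      _ = 2 * ψ ω * ‖z - y‖ := by ring
  · refine ((hderiv ω).exp.mul_const (v ω)).congr_fderiv ?_
    rw [smul_smul, smul_smul, mul_comm]

theorem integral_tilted_eq_inv_smul {G : Type*} [NormedAddCommGroup G] [NormedSpace ℝ G]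
    (b : Ω → ℝ) (g : Ω → G) :
    ∫ ω, g ω ∂μ.tilted b = (∫ ω, Real.exp (b ω) ∂μ)⁻¹ • ∫ ω, Real.exp (b ω) • g ω ∂μ := by
  rw [integral_tilted, ← integral_smul]
  simp only [smul_smul, div_eq_inv_mul]

theorem integral_tilted_eq_div {b : Ω → ℝ} {c : ℝ} (hc : c ≠ 0) (v : Ω → ℝ) :
    ∫ ω, v ω ∂μ.tilted b =
      (∫ ω, v ω * (c * Real.exp (b ω)) ∂μ) / ∫ ω, c * Real.exp (b ω) ∂μ := by
  simp only [mul_left_comm _ c, integral_const_mul, mul_div_mul_left _ _ hc,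
    integral_tilted_eq_inv_smul, smul_eq_mul, inv_mul_eq_div, mul_comm]

theorem hasFDerivAt_integral_tilted (hne : ∫ ω, Real.exp (a y ω) ∂μ ≠ 0)
    (hden : HasFDerivAt (fun z => ∫ ω, Real.exp (a z ω) ∂μ)
      (∫ ω, Real.exp (a y ω) • a' ω ∂μ) y)
    (hnum : HasFDerivAt (fun z => ∫ ω, Real.exp (a z ω) * v ω ∂μ)
      (∫ ω, Real.exp (a y ω) • v ω • a' ω ∂μ) y) :
    HasFDerivAt (fun z => ∫ ω, v ω ∂μ.tilted (a z))
      (∫ ω, v ω • a' ω ∂μ.tilted (a y)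
        - (∫ ω, v ω ∂μ.tilted (a y)) • ∫ ω, a' ω ∂μ.tilted (a y)) y := by
  simp only [integral_tilted_eq_inv_smul, smul_eq_mul]
  refine (((hasDerivAt_inv hne).comp_hasFDerivAt y hden).mul hnum).congr_fderiv ?_
  simp only [Function.comp_apply, smul_smul, neg_smul, smul_neg, sub_eq_add_neg]
  congr 3
  ring

end Tilting

section ExponentialFamily

theorem one_le_one_add_norm_sq {V : Type*} [SeminormedAddCommGroup V] (x : V) :
    1 ≤ (1 + ‖x‖) ^ 2 :=
  one_le_pow₀ (le_add_of_nonneg_right (norm_nonneg x))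

variable {V E : Type*} [NormedAddCommGroup V] [NormedSpace ℝ V] [MeasurableSpace V]

/-- The posterior law of `X`, for the prior `μ` and the likelihood `exp (t x - φ x)`, where the
natural parameter (the statistic `T y` of the observation, paired with `x`) is a functional `t`. -/
noncomputable def expPosterior (μ : Measure V) (φ : V → ℝ) (t : StrongDual ℝ V) : Measure V :=
  μ.tilted fun x => t x - φ x

/-- The domination hypothesis: near `y`, one integrable function bounds the likelihoods
`exp (θ z x - φ x)` together with their second-order moments. -/
def DominatedNear [TopologicalSpace E] (μ : Measure V) (φ : V → ℝ)
    (θ : E → StrongDual ℝ V) (y : E) : Prop :=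
  ∃ N ∈ 𝓝 y, ∃ ψ : V → ℝ, Integrable ψ μ ∧
    ∀ z ∈ N, ∀ x, (1 + ‖x‖) ^ 2 * Real.exp (θ z x - φ x) ≤ ψ x

variable [BorelSpace V] {μ : Measure V} {φ : V → ℝ} {θ : E → StrongDual ℝ V} {y : E}

theorem covarianceBilinDual_eq_sub [CompleteSpace V] [IsProbabilityMeasure μ] (hμ : MemLp id 2 μ)
    (ℓ₁ ℓ₂ : StrongDual ℝ V) :
    ProbabilityTheory.covarianceBilinDual μ ℓ₁ ℓ₂
      = ∫ x, ℓ₁ x * ℓ₂ x ∂μ - (∫ x, ℓ₁ x ∂μ) * ∫ x, ℓ₂ x ∂μ := by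
  rw [ProbabilityTheory.covarianceBilinDual_eq_covariance hμ]
  exact ProbabilityTheory.covariance_eq_sub (hμ.continuousLinearMap_comp ℓ₁)
    (hμ.continuousLinearMap_comp ℓ₂)

namespace DominatedNear

section Integrability

variable [TopologicalSpace E]

theorem integrable_exp_mul (hdom : DominatedNear μ φ θ y) (hφ : AEMeasurable φ μ) {v : V → ℝ}
    (hv : AEStronglyMeasurable v μ) {C : ℝ} (hvC : ∀ x, |v x| ≤ C * (1 + ‖x‖) ^ 2) :
    Integrable (fun x => Real.exp (θ y x - φ x) * v x) μ := by
  obtain ⟨N, hN, ψ, hψ, hbound⟩ := hdom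
  have hC : 0 ≤ C := by simpa using (abs_nonneg _).trans (hvC 0)
  refine (hψ.const_mul C).mono' (AEStronglyMeasurable.mul (by fun_prop) hv)
    (ae_of_all _ fun x => ?_)
  exact norm_exp_mul_le hC (hvC x) (hbound y (mem_of_mem_nhds hN) x)

theorem integrable_exp (hdom : DominatedNear μ φ θ y) (hφ : AEMeasurable φ μ) :
    Integrable (fun x => Real.exp (θ y x - φ x)) μ := by
  simpa using hdom.integrable_exp_mul hφ (v := fun _ => 1) (C := 1) aestronglyMeasurable_const
    fun x => by simpa only [abs_one, one_mul] using one_le_one_add_norm_sq x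

theorem integral_exp_pos [NeZero μ] (hdom : DominatedNear μ φ θ y) (hφ : AEMeasurable φ μ) :
    0 < ∫ x, Real.exp (θ y x - φ x) ∂μ :=
  MeasureTheory.integral_exp_pos (hdom.integrable_exp hφ)

theorem isProbabilityMeasure_expPosterior [NeZero μ] (hdom : DominatedNear μ φ θ y)
    (hφ : AEMeasurable φ μ) : IsProbabilityMeasure (expPosterior μ φ (θ y)) :=
  isProbabilityMeasure_tilted (hdom.integrable_exp hφ)

theorem memLp_two_id_expPosterior [SecondCountableTopology V] (hdom : DominatedNear μ φ θ y)
    (hφ : AEMeasurable φ μ) : MemLp id 2 (expPosterior μ φ (θ y)) := by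
  rw [memLp_two_iff_integrable_sq_norm aestronglyMeasurable_id, expPosterior,
    integrable_tilted_iff (hdom.integrable_exp hφ)]
  refine hdom.integrable_exp_mul hφ (C := 1) (by fun_prop) fun x => ?_
  rw [abs_of_nonneg (by positivity), one_mul, id]
  gcongr
  exact le_add_of_nonneg_left zero_le_one

theorem continuousAt_integral_exp_mul [FirstCountableTopology E] (hdom : DominatedNear μ φ θ y)
    (hφ : AEMeasurable φ μ) (hθ : ContinuousAt θ y) {v : V → ℝ} (hv : AEStronglyMeasurable v μ)
    {C : ℝ} (hvC : ∀ x, |v x| ≤ C * (1 + ‖x‖) ^ 2) :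
    ContinuousAt (fun z => ∫ x, Real.exp (θ z x - φ x) * v x ∂μ) y := by
  have hC : 0 ≤ C := by simpa using (abs_nonneg _).trans (hvC 0)
  obtain ⟨N, hN, ψ, hψ, hbound⟩ := hdom
  refine continuousAt_of_dominated (bound := fun x => C * ψ x)
    (Filter.Eventually.of_forall fun z => AEStronglyMeasurable.mul (by fun_prop) hv)
    (Filter.mem_of_superset hN fun z hz => ae_of_all _ fun x =>
      norm_exp_mul_le hC (hvC x) (hbound z hz x))
    (hψ.const_mul C) (ae_of_all _ fun x => ?_)
  exact ((hθ.clm_apply continuousAt_const).sub_const (φ x)).rexp.mul_const (v x)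

theorem continuousAt_integral_expPosterior [FirstCountableTopology E] [NeZero μ]
    (hdom : DominatedNear μ φ θ y) (hφ : AEMeasurable φ μ) (hθ : ContinuousAt θ y) {v : V → ℝ}
    (hv : AEStronglyMeasurable v μ) {C : ℝ} (hvC : ∀ x, |v x| ≤ C * (1 + ‖x‖) ^ 2) :
    ContinuousAt (fun z => ∫ x, v x ∂expPosterior μ φ (θ z)) y := by
  have hden : ContinuousAt (fun z => ∫ x, Real.exp (θ z x - φ x) ∂μ) y := by
    simpa using hdom.continuousAt_integral_exp_mul hφ hθ (v := fun _ => 1) (C := 1)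
      aestronglyMeasurable_const fun x => by
        simpa only [abs_one, one_mul] using one_le_one_add_norm_sq x
  simp only [expPosterior, integral_tilted_eq_inv_smul, smul_eq_mul]
  exact (hden.inv₀ (hdom.integral_exp_pos hφ).ne').mul
    (hdom.continuousAt_integral_exp_mul hφ hθ hv hvC)

theorem continuousAt_integral_expPosterior_dual [FirstCountableTopology E] [NeZero μ]
    (hdom : DominatedNear μ φ θ y) (hφ : AEMeasurable φ μ) (hθ : ContinuousAt θ y)
    (ℓ : StrongDual ℝ V) :
    ContinuousAt (fun z => ∫ x, ℓ x ∂expPosterior μ φ (θ z)) y :=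
  hdom.continuousAt_integral_expPosterior hφ hθ ℓ.continuous.aestronglyMeasurable
    (C := ‖ℓ‖) fun x => (ℓ.le_opNorm x).trans <| by
      gcongr
      nlinarith [norm_nonneg x]

theorem continuousAt_integral_expPosterior_dual_mul_dual [FirstCountableTopology E] [NeZero μ]
    (hdom : DominatedNear μ φ θ y) (hφ : AEMeasurable φ μ) (hθ : ContinuousAt θ y)
    (ℓ₁ ℓ₂ : StrongDual ℝ V) :
    ContinuousAt (fun z => ∫ x, ℓ₁ x * ℓ₂ x ∂expPosterior μ φ (θ z)) y :=
  hdom.continuousAt_integral_expPosterior hφ hθ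
    (ℓ₁.continuous.mul ℓ₂.continuous).aestronglyMeasurable (C := ‖ℓ₁‖ * ‖ℓ₂‖) fun x => by
      calc |ℓ₁ x * ℓ₂ x| = ‖ℓ₁ x‖ * ‖ℓ₂ x‖ := abs_mul _ _
        _ ≤ ‖ℓ₁‖ * ‖x‖ * (‖ℓ₂‖ * ‖x‖) := by
          gcongr
          exacts [ℓ₁.le_opNorm x, ℓ₂.le_opNorm x]
        _ = ‖ℓ₁‖ * ‖ℓ₂‖ * ‖x‖ ^ 2 := by ring
        _ ≤ ‖ℓ₁‖ * ‖ℓ₂‖ * (1 + ‖x‖) ^ 2 := by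
          gcongr
          exact le_add_of_nonneg_left zero_le_one

theorem continuousOn_covarianceBilinDual_expPosterior [FirstCountableTopology E] [NeZero μ]
    [CompleteSpace V] [SecondCountableTopology V] {s : Set E}
    (hdom : ∀ z ∈ s, DominatedNear μ φ θ z) (hφ : AEMeasurable φ μ)
    (hθ : ∀ z ∈ s, ContinuousAt θ z) (ℓ₁ ℓ₂ : StrongDual ℝ V) :
    ContinuousOn
      (fun z => ProbabilityTheory.covarianceBilinDual (expPosterior μ φ (θ z)) ℓ₁ ℓ₂) s := by
  refine ContinuousOn.congr (fun z hz => ContinuousAt.continuousWithinAt ?_) fun z hz =>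
    have := (hdom z hz).isProbabilityMeasure_expPosterior hφ
    covarianceBilinDual_eq_sub ((hdom z hz).memLp_two_id_expPosterior hφ) ℓ₁ ℓ₂
  have hmean (ℓ : StrongDual ℝ V) :=
    (hdom z hz).continuousAt_integral_expPosterior_dual hφ (hθ z hz) ℓ
  exact ((hdom z hz).continuousAt_integral_expPosterior_dual_mul_dual hφ (hθ z hz) ℓ₁ ℓ₂).sub
    ((hmean ℓ₁).mul (hmean ℓ₂))

end Integrability

variable [NormedAddCommGroup E] [NormedSpace ℝ E] {θ' : E →L[ℝ] StrongDual ℝ V}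

theorem hasFDerivAt_integral_exp_mul [SecondCountableTopology V]
    (hdom : DominatedNear μ φ θ y) (hφ : AEMeasurable φ μ) (hθ : HasFDerivAt θ θ' y)
    {v : V → ℝ} (hv : AEStronglyMeasurable v μ) {C : ℝ} (hvC : ∀ x, |v x| ≤ C * (1 + ‖x‖)) :
    Integrable (fun x => Real.exp (θ y x - φ x) • v x • θ'.flip x) μ ∧
      HasFDerivAt (fun z => ∫ x, Real.exp (θ z x - φ x) * v x ∂μ)
        (∫ x, Real.exp (θ y x - φ x) • v x • θ'.flip x ∂μ) y := by
  have hC : 0 ≤ C := by simpa using (abs_nonneg _).trans (hvC 0)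
  have hint := hdom.integrable_exp_mul hφ hv (C := C) fun x => (hvC x).trans <| by
    gcongr
    exact le_self_pow₀ (le_add_of_nonneg_right (norm_nonneg x)) two_ne_zero
  obtain ⟨N, hN, ψ, hψ, hbound⟩ := hdom
  obtain ⟨K, hK, hθlip⟩ := hθ.isBigO_sub.exists_nonneg
  refine hasFDerivAt_integral_exp_mul_of_dominated (a := fun z x => θ z x - φ x)
    (L := fun x => K * ‖x‖) (ψ := fun x => K * C * ψ x) (Filter.inter_mem hN hθlip.bound)
    (fun z _ => by fun_prop) θ'.flip.continuous.aestronglyMeasurable hv hint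
    (fun z hz x => ?_) (hψ.const_mul _) (fun z hz x => ?_) fun x => ?_
  · calc |θ z x - φ x - (θ y x - φ x)| = ‖(θ z - θ y) x‖ := by
          rw [sub_sub_sub_cancel_right, sub_apply, Real.norm_eq_abs]
      _ ≤ K * ‖z - y‖ * ‖x‖ := (θ z - θ y).le_of_opNorm_le hz.2 x
      _ = K * ‖x‖ * ‖z - y‖ := by ring
  · calc K * ‖x‖ * |v x| * Real.exp (θ z x - φ x)
        ≤ K * (1 + ‖x‖) * (C * (1 + ‖x‖)) * Real.exp (θ z x - φ x) := by
          gcongr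
          exacts [le_add_of_nonneg_left zero_le_one, hvC x]
      _ = K * C * ((1 + ‖x‖) ^ 2 * Real.exp (θ z x - φ x)) := by ring
      _ ≤ K * C * ψ x := by
          gcongr
          exact hbound z hz.1 x
  · exact (hθ.clm_apply (hasFDerivAt_const x y)).sub_const (φ x) |>.congr_fderiv (by ext; simp)

theorem hasFDerivAt_integral_expPosterior [NeZero μ] [CompleteSpace V] [SecondCountableTopology V]
    (hdom : DominatedNear μ φ θ y) (hφ : AEMeasurable φ μ) (hθ : HasFDerivAt θ θ' y)
    (ℓ : StrongDual ℝ V) :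
    HasFDerivAt (fun z => ∫ x, ℓ x ∂expPosterior μ φ (θ z))
      (ProbabilityTheory.covarianceBilinDual (expPosterior μ φ (θ y)) ℓ ∘L θ') y := by
  have hexp := hdom.integrable_exp hφ
  obtain ⟨hden_int, hden⟩ := hdom.hasFDerivAt_integral_exp_mul hφ hθ (v := fun _ => 1) (C := 1)
    aestronglyMeasurable_const fun x => by simp
  obtain ⟨hnum_int, hnum⟩ := hdom.hasFDerivAt_integral_exp_mul hφ hθ
    ℓ.continuous.aestronglyMeasurable (C := ‖ℓ‖) fun x => (ℓ.le_opNorm x).trans <| by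
      gcongr
      exact le_add_of_nonneg_left zero_le_one
  simp only [mul_one, one_smul] at hden hden_int
  refine (hasFDerivAt_integral_tilted (hdom.integral_exp_pos hφ).ne' hden hnum).congr_fderiv ?_
  have := hdom.isProbabilityMeasure_expPosterior hφ
  have hmem := hdom.memLp_two_id_expPosterior hφ
  ext w
  rw [ContinuousLinearMap.comp_apply, covarianceBilinDual_eq_sub hmem, sub_apply, smul_apply,
    ContinuousLinearMap.integral_apply ((integrable_tilted_iff hexp _).2 hnum_int),
    ContinuousLinearMap.integral_apply ((integrable_tilted_iff hexp _).2 hden_int)]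
  rfl

end DominatedNear

end ExponentialFamily

section Coordinates

open ContinuousLinearMap (proj)

variable {ι : Type*} [Fintype ι]

/-- The functional `x ↦ x ⬝ᵥ t` attached to the value `t` of the sufficient statistic. -/
noncomputable def dotProductDual : (ι → ℝ) →L[ℝ] StrongDual ℝ (ι → ℝ) :=
  (dotProductBilin ℝ ℝ).flip.toContinuousBilinearMap

theorem dotProductDual_apply (t x : ι → ℝ) : dotProductDual t x = x ⬝ᵥ t := rfl

theorem dotProductDual_eq_sum (t : ι → ℝ) :
    dotProductDual t = ∑ l, t l • (proj l : StrongDual ℝ (ι → ℝ)) := by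
  ext x
  simp [dotProductDual_apply, dotProduct, mul_comm]

/-- The posterior mean `E[X | Y = y]` at the value `t = T y` of the sufficient statistic. -/
noncomputable def posteriorMean (μ : Measure (ι → ℝ)) (φ : (ι → ℝ) → ℝ) (t : ι → ℝ) : ι → ℝ :=
  fun i => ∫ x, x i ∂expPosterior μ φ (dotProductDual t)

/-- The posterior covariance matrix `Var(X | Y = y)` at the value `t = T y` of the sufficient
statistic. -/
noncomputable def posteriorCov (μ : Measure (ι → ℝ)) (φ : (ι → ℝ) → ℝ) (t : ι → ℝ) :
    Matrix ι ι ℝ :=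
  .of fun l i =>
    ProbabilityTheory.covarianceBilinDual (expPosterior μ φ (dotProductDual t)) (proj l) (proj i)

variable {E : Type*} {μ : Measure (ι → ℝ)} [NeZero μ] {φ : (ι → ℝ) → ℝ} {T : E → ι → ℝ} {y : E}

theorem fderiv_posteriorMean_apply [NormedAddCommGroup E] [NormedSpace ℝ E]
    (hdom : DominatedNear μ φ (fun z => dotProductDual (T z)) y) (hφ : AEMeasurable φ μ)
    {T' : E →L[ℝ] ι → ℝ} (hT : HasFDerivAt T T' y) (w : E) :
    fderiv ℝ (fun z => posteriorMean μ φ (T z)) y w = T' w ᵥ* posteriorCov μ φ (T y) := by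
  have hmean : HasFDerivAt (fun z => posteriorMean μ φ (T z)) _ y := hasFDerivAt_pi.2 fun i =>
    hdom.hasFDerivAt_integral_expPosterior hφ (dotProductDual.hasFDerivAt.comp y hT) (proj i)
  rw [hmean.fderiv]
  ext i
  simp only [ContinuousLinearMap.coe_pi', ContinuousLinearMap.comp_apply,
    dotProductDual_eq_sum (T' w), map_sum, map_smul, smul_eq_mul, Matrix.vecMul, dotProduct,
    posteriorCov, Matrix.of_apply]
  exact Finset.sum_congr rfl fun l _ => by rw [ProbabilityTheory.covarianceBilinDual_comm]

theorem of_fderiv_posteriorMean [NormedAddCommGroup E] [NormedSpace ℝ E]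
    (hdom : DominatedNear μ φ (fun z => dotProductDual (T z)) y) (hφ : AEMeasurable φ μ)
    {T' : E →L[ℝ] ι → ℝ} (hT : HasFDerivAt T T' y) {κ : Type*} (e : κ → E) :
    Matrix.of (fun j i => fderiv ℝ (fun z => posteriorMean μ φ (T z)) y (e j) i) =
      Matrix.of (fun j l => T' (e j) l) * posteriorCov μ φ (T y) := by
  ext j i
  rw [Matrix.of_apply, fderiv_posteriorMean_apply hdom hφ hT]
  rfl

theorem integral_sub_posteriorMean_mul_sub [TopologicalSpace E]
    (hdom : DominatedNear μ φ (fun z => dotProductDual (T z)) y) (hφ : AEMeasurable φ μ)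
    (l i : ι) :
    ∫ x, (x l - posteriorMean μ φ (T y) l) * (x i - posteriorMean μ φ (T y) i)
        ∂expPosterior μ φ (dotProductDual (T y)) = posteriorCov μ φ (T y) l i :=
  have := hdom.isProbabilityMeasure_expPosterior hφ
  (ProbabilityTheory.covarianceBilinDual_apply (hdom.memLp_two_id_expPosterior hφ)
    (proj l : StrongDual ℝ (ι → ℝ)) (proj i)).symm

theorem posteriorCov_apply [TopologicalSpace E]
    (hdom : DominatedNear μ φ (fun z => dotProductDual (T z)) y) (hφ : AEMeasurable φ μ)
    (l i : ι) :
    posteriorCov μ φ (T y) l i = ∫ x, x l * x i ∂expPosterior μ φ (dotProductDual (T y)) -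
      posteriorMean μ φ (T y) l * posteriorMean μ φ (T y) i :=
  have := hdom.isProbabilityMeasure_expPosterior hφ
  covarianceBilinDual_eq_sub (hdom.memLp_two_id_expPosterior hφ)
    (proj l : StrongDual ℝ (ι → ℝ)) (proj i)

theorem continuousOn_posteriorCov [TopologicalSpace E] [FirstCountableTopology E] {s : Set E}
    (hdom : ∀ z ∈ s, DominatedNear μ φ (fun z => dotProductDual (T z)) z)
    (hφ : AEMeasurable φ μ) (hT : ∀ z ∈ s, ContinuousAt T z) :
    ContinuousOn (fun z => posteriorCov μ φ (T z)) s :=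
  continuousOn_pi.2 fun _ => continuousOn_pi.2 fun _ =>
    DominatedNear.continuousOn_covarianceBilinDual_expPosterior hdom hφ
      (fun z hz => dotProductDual.continuous.continuousAt.comp (hT z hz)) _ _

end Coordinates

-- `k` itself need not be measurable, so the sign of `g` is restored by multiplying with `g / |g|`.
theorem integrable_mul_of_integrable_abs_mul {Ω : Type*} [MeasurableSpace Ω] {μ : Measure Ω}
    {g k : Ω → ℝ} (hg : AEStronglyMeasurable g μ) (hgk : Integrable (fun ω => |g ω| * k ω) μ) :
    Integrable (fun ω => g ω * k ω) μ := by
  have hsign : ∀ᵐ ω ∂μ, ‖g ω / |g ω|‖ ≤ 1 := ae_of_all _ fun ω => by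
    rw [norm_div, Real.norm_eq_abs, Real.norm_eq_abs, abs_abs]
    exact div_self_le_one _
  refine (hgk.bdd_mul (hg.aemeasurable.div hg.aemeasurable.abs).aestronglyMeasurable
    hsign).congr (ae_of_all _ fun ω => ?_)
  change g ω / |g ω| * (|g ω| * k ω) = g ω * k ω
  rcases eq_or_ne (g ω) 0 with h0 | h0
  · simp [h0]
  · rw [← mul_assoc, div_mul_cancel₀ _ (abs_ne_zero.2 h0)]

theorem stmt_4_general {ι : Type*} [Fintype ι] [DecidableEq ι]
    (μ : Measure (ι → ℝ)) [NeZero μ] (𝒴 : Set (ι → ℝ)) (h𝒴 : IsOpen 𝒴)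
    (h : (ι → ℝ) → ℝ) (hhpos : ∀ y ∈ 𝒴, 0 < h y)
    (T : (ι → ℝ) → ι → ℝ) (T' : (ι → ℝ) → (ι → ℝ) →L[ℝ] ι → ℝ)
    (hT : ∀ y ∈ 𝒴, HasFDerivAt T (T' y) y)
    (φ : (ι → ℝ) → ℝ) (hφ : AEMeasurable φ μ)
    (f : (ι → ℝ) → (ι → ℝ) → ℝ) (hf : ∀ y x, f y x = h y * Real.exp (x ⬝ᵥ T y - φ x))
    (fY : (ι → ℝ) → ℝ) (hfY : ∀ y, fY y = ∫ x, f y x ∂μ)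
    (F : (ι → ℝ) → ι → ℝ) (hF : ∀ y i, F y i = (∫ x, x i * f y x ∂μ) / fY y)
    (hdom : ∀ y ∈ 𝒴, DominatedNear μ φ (fun z => dotProductDual (T z)) y)
    (JT JF : (ι → ℝ) → Matrix ι ι ℝ)
    (hJT : ∀ y j l, JT y j l = T' y (Pi.single j 1) l)
    (hJF : ∀ y j i, JF y j i = fderiv ℝ F y (Pi.single j 1) i)
    (hinv : ∀ y ∈ 𝒴, IsUnit (JT y))
    (hVarInt : ∀ l i, IntegrableOn
      (fun y => |(∫ x, x l * x i * f y x ∂μ) / fY y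
        - (∫ x, x l * f y x ∂μ) / fY y * ((∫ x, x i * f y x ∂μ) / fY y)| * fY y) 𝒴)
    (l i : ι) :
    IntegrableOn (fun y => ((JT y)⁻¹ * JF y) l i * fY y) 𝒴 ∧
      ∫ y in 𝒴, ∫ x, (x l - F y l) * (x i - F y i) * f y x ∂μ
        = ∫ y in 𝒴, ((JT y)⁻¹ * JF y) l i * fY y := by
  have hbayes : ∀ y ∈ 𝒴, ∀ v : (ι → ℝ) → ℝ, (∫ x, v x * f y x ∂μ) / fY y
      = ∫ x, v x ∂expPosterior μ φ (dotProductDual (T y)) := fun y hy v => by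
    simp only [hfY, hf]
    exact (integral_tilted_eq_div (hhpos y hy).ne' v).symm
  have hfY0 : ∀ y ∈ 𝒴, fY y ≠ 0 := fun y hy => by
    simp only [hfY, hf, integral_const_mul]
    exact (mul_pos (hhpos y hy) ((hdom y hy).integral_exp_pos hφ)).ne'
  have hmean : ∀ y ∈ 𝒴, F y = posteriorMean μ φ (T y) :=
    fun y hy => funext fun i => (hF y i).trans (hbayes y hy _)
  have hjacobian : ∀ y ∈ 𝒴, JF y = JT y * posteriorCov μ φ (T y) := fun y hy => by
    have hfderiv := (Filter.eventuallyEq_of_mem (h𝒴.mem_nhds hy) hmean).fderiv_eq (𝕜 := ℝ)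
    convert of_fderiv_posteriorMean (hdom y hy) hφ (hT y hy) (Pi.single · 1) using 2 <;> ext
    exacts [by rw [hJF, hfderiv, Matrix.of_apply], hJT ..]
  have hcov : ∀ y ∈ 𝒴, (JT y)⁻¹ * JF y = posteriorCov μ φ (T y) := fun y hy => by
    rw [hjacobian y hy, Matrix.nonsing_inv_mul_cancel_left _ _
      ((Matrix.isUnit_iff_isUnit_det _).1 (hinv y hy))]
  constructor
  · have hcov_cont := continuousOn_pi.1 (continuousOn_pi.1
      (continuousOn_posteriorCov hdom hφ fun y hy => (hT y hy).continuousAt) l) i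
    refine IntegrableOn.congr_fun (integrable_mul_of_integrable_abs_mul (k := fY)
      (hcov_cont.aestronglyMeasurable h𝒴.measurableSet) ?_)
      (fun y hy => by rw [hcov y hy]) h𝒴.measurableSet
    refine (hVarInt l i).congr_fun (fun y hy => ?_) h𝒴.measurableSet
    simp only [hbayes y hy, posteriorCov_apply (hdom y hy) hφ]
    rfl
  · refine setIntegral_congr_fun h𝒴.measurableSet fun y hy => ?_
    simp only [hcov y hy]
    rw [← div_eq_iff (hfY0 y hy), hbayes y hy, hmean y hy]
    exact integral_sub_posteriorMean_mul_sub (hdom y hy) hφ l i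

/-- MMSE representation (Corollary 1):
`MMSE(X|Y) = E[(J_Y T(Y))⁻¹ J_Y E[X|Y]]`, stated entrywise. -/
theorem stmt_4
    {d : ℕ}
    (μ : Measure (Fin d → ℝ)) [IsProbabilityMeasure μ]
    (𝒴 : Set (Fin d → ℝ)) (h𝒴 : IsOpen 𝒴)
    (h : (Fin d → ℝ) → ℝ)
    (hhpos : ∀ y ∈ 𝒴, 0 < h y)
    (hhdiff : ∀ y ∈ 𝒴, DifferentiableAt ℝ h y)
    (T : (Fin d → ℝ) → (Fin d → ℝ))
    (T' : (Fin d → ℝ) → ((Fin d → ℝ) →L[ℝ] (Fin d → ℝ)))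
    (hT : ∀ y ∈ 𝒴, HasFDerivAt T (T' y) y)
    (φ : (Fin d → ℝ) → ℝ) (hφ : Measurable φ)
    (f : (Fin d → ℝ) → (Fin d → ℝ) → ℝ)
    (hf : ∀ y x, f y x = h y * Real.exp ((∑ l, x l * T y l) - φ x))
    (fY : (Fin d → ℝ) → ℝ)
    (hfY : ∀ y, fY y = ∫ x, f y x ∂μ)
    (hfYpos : ∀ y ∈ 𝒴, 0 < fY y)
    (hfYfin : ∀ y ∈ 𝒴, Integrable (fun x => f y x) μ)
    (F : (Fin d → ℝ) → (Fin d → ℝ))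
    (hF : ∀ y i, F y i = (∫ x, x i * f y x ∂μ) / fY y)
    -- domination hypothesis of Proposition 1
    (hdom : ∀ y ∈ 𝒴, ∃ N ∈ nhds y, ∃ ψ : (Fin d → ℝ) → ℝ, Integrable ψ μ ∧
      ∀ y' ∈ N, ∀ x,
        (1 + ‖x‖) ^ 2 * Real.exp ((∑ l, x l * T y' l) - φ x) ≤ ψ x)
    -- Jacobian matrices of `T` and of `F`
    (JT JF : (Fin d → ℝ) → Matrix (Fin d) (Fin d) ℝ)
    (hJT : ∀ y j l, JT y j l = T' y (Pi.single j 1) l)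
    (hJF : ∀ y j i, JF y j i = fderiv ℝ F y (Pi.single j 1) i)
    -- invertibility of the Jacobian of the sufficient statistics
    (hinv : ∀ y ∈ 𝒴, IsUnit (JT y))
    -- the joint law of (X,Y) has density f(y|x) w.r.t. μ ⊗ Lebesgue on ℝ^d × 𝒴
    (hjoint : IntegrableOn fY 𝒴 volume ∧ ∫ y in 𝒴, fY y = 1)
    -- integrability of the posterior covariance against the marginal density
    (hVarInt : ∀ (l i : Fin d), IntegrableOn
      (fun y => |(∫ x, x l * x i * f y x ∂μ) / fY y
        - ((∫ x, x l * f y x ∂μ) / fY y) * ((∫ x, x i * f y x ∂μ) / fY y)| * fY y)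
      𝒴 volume) :
    ∀ (l i : Fin d),
      (∫ y in 𝒴, ∫ x, (x l - F y l) * (x i - F y i) * f y x ∂μ)
        = ∫ y in 𝒴, ((JT y)⁻¹ * JF y) l i * fY y :=
  fun l i => (stmt_4_general μ 𝒴 h𝒴 h hhpos T T' hT φ hφ.aemeasurable f hf fY hfY F hF hdom
    JT JF hJT hJF hinv hVarInt l i).2
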